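/- arXiv:2307.04647 — 4 statements merged into one kernel-verified Lean document; each statement's English description precedes it below -/
import Mathlib

section
/- Let A be a monetary acceptance set and C ⊆ X be stable under scalar addition (C + ℝ = C). If A^∁ ∩ C is convex, then ρ_A is concave on C: for all X, Y ∈ C and λ ∈ [0,1], ρ_A(λX + (1−λ)Y) ≥ λρ_A(X) + (1−λ)ρ_A(Y). -/
open MeasureTheory Set

variable {Ω : Type*} [MeasurableSpace Ω]

/-- `A` is monotone: if `X ∈ A` and `X ≤ Y` almost surely, then `Y ∈ A`. -/
def MonotoneSet (μ : Measure Ω) (A : Set (Ω → ℝ)) : Prop :=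
  ∀ X ∈ A, ∀ Y : Ω → ℝ, (∀ᵐ ω ∂μ, X ω ≤ Y ω) → Y ∈ A

/-- `A` is normalized: `inf {m ∈ ℝ : m ∈ A} = 0`, identifying reals with constants. -/
def NormalizedSet (A : Set (Ω → ℝ)) : Prop :=
  sInf {m : ℝ | (fun _ => m) ∈ A} = 0

/-- A monetary acceptance set: nonempty, monotone and normalized. -/
def MonetaryAcceptance (μ : Measure Ω) (A : Set (Ω → ℝ)) : Prop :=
  A.Nonempty ∧ MonotoneSet μ A ∧ NormalizedSet A

/-- `C` is stable under scalar addition: `C + ℝ = C`. -/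
def StableScalarAdd (C : Set (Ω → ℝ)) : Prop :=
  ∀ X ∈ C, ∀ c : ℝ, (fun ω => X ω + c) ∈ C

/-- The risk measure induced by `A`: `ρ_A(X) = inf {m ∈ ℝ : X + m ∈ A}`
(in `EReal`, so that `inf ∅ = +∞`). -/
noncomputable def rho (A : Set (Ω → ℝ)) (X : Ω → ℝ) : EReal :=
  sInf ((fun m : ℝ => (m : EReal)) '' {m : ℝ | (fun ω => X ω + m) ∈ A})

theorem ereal_div_lt_aux (l : ℝ) (hl : 0 < l) (a : ℝ) (x : EReal)
    (h : (a : EReal) < (l : EReal) * x) : ((a / l : ℝ) : EReal) < x := by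
  induction x with
  | bot => rw [EReal.coe_mul_bot_of_pos hl] at h; exact absurd h (by simp)
  | top => exact EReal.coe_lt_top _
  | coe x =>
    rw [← EReal.coe_mul, EReal.coe_lt_coe_iff] at h
    rw [EReal.coe_lt_coe_iff, div_lt_iff₀ hl]
    linarith

theorem not_mem_of_lt_rho_aux {Ω : Type*} (A : Set (Ω → ℝ)) (X : Ω → ℝ) (a : ℝ)
    (h : (a : EReal) < rho A X) : (fun ω => X ω + a) ∉ A := by
  intro hm
  exact absurd (sInf_le ⟨a, hm, rfl⟩ : rho A X ≤ (a : EReal)) (not_le.mpr h)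

/-- If `A` is a monetary acceptance set, `C` is stable under scalar addition and
`A^∁ ∩ C` is convex, then `ρ_A` is concave on `C`. -/
theorem rho_concave_on_of_compl_inter_convex (μ : Measure Ω) [IsProbabilityMeasure μ]
    (A C : Set (Ω → ℝ)) (hA : MonetaryAcceptance μ A) (hC : StableScalarAdd C)
    (hconv : Convex ℝ (Aᶜ ∩ C)) :
    ∀ X ∈ C, ∀ Y ∈ C, ∀ l ∈ Icc (0 : ℝ) 1,
      (l : EReal) * rho A X + ((1 - l : ℝ) : EReal) * rho A Y ≤ rho A (l • X + (1 - l) • Y) := by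
  intro X hX Y hY l hl
  obtain ⟨h0, h1⟩ := hl
  rcases h0.eq_or_lt with rfl | h0
  · simp
  rcases h1.eq_or_lt with rfl | h1
  · simp
  have h1' : 0 < 1 - l := by linarith
  apply EReal.add_le_of_forall_lt
  intro a ha b hb
  induction a with
  | bot => simp
  | top => exact absurd ha (by simp)
  | coe a =>
  induction b with
  | bot => simp
  | top => exact absurd hb (by simp)
  | coe b =>
  have hXa := not_mem_of_lt_rho_aux A X _ (ereal_div_lt_aux l h0 a _ ha)
  have hYb := not_mem_of_lt_rho_aux A Y _ (ereal_div_lt_aux (1 - l) h1' b _ hb)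
  have hZ := (hconv ⟨hXa, hC X hX _⟩ ⟨hYb, hC Y hY _⟩ h0.le h1'.le (by ring)).1
  apply le_sInf
  rintro _ ⟨m, hm, rfl⟩
  show (a : EReal) + (b : EReal) ≤ (m : EReal)
  rw [← EReal.coe_add, EReal.coe_le_coe_iff]
  by_contra! hlt
  apply hZ
  refine hA.2.1 _ hm _ (Filter.Eventually.of_forall fun ω => ?_)
  simp only [Pi.add_apply, Pi.smul_apply, smul_eq_mul]
  have e1 : l * (a / l) = a := by field_simp
  have e2 : (1 - l) * (b / (1 - l)) = b := by field_simp
  rw [mul_add, mul_add, e1, e2]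
  linarith
end

section
/- For any random variable X on a probability space, the set C_X := {Y : Y is comonotonic to X} is closed under convergence in probability: if Y_n ∈ C_X for all n and Y_n → Y in probability, then Y ∈ C_X. -/
open MeasureTheory Set

variable {Ω : Type*} [MeasurableSpace Ω]

/-- `X` and `Y` are comonotonic:
`(X ω - X ω') * (Y ω - Y ω') ≥ 0` for `μ ⊗ μ`-almost every pair `(ω, ω')`. -/
def Comonotonic (μ : Measure Ω) (X Y : Ω → ℝ) : Prop :=
  ∀ᵐ p ∂(μ.prod μ), 0 ≤ (X p.1 - X p.2) * (Y p.1 - Y p.2)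

/-- The set `C_X` of random variables comonotonic to `X` is closed under convergence in
probability: if each `Y n` is comonotonic to `X` and `Y n → Ylim` in probability,
then `Ylim` is comonotonic to `X`. -/
theorem comonotonic_set_closed_in_probability (μ : Measure Ω) [IsProbabilityMeasure μ]
    (X : Ω → ℝ) (Y : ℕ → Ω → ℝ) (Ylim : Ω → ℝ)
    (hmeas : ∀ n, Measurable (Y n)) (hmeaslim : Measurable Ylim)
    (hmem : ∀ n, Y n ∈ {Z : Ω → ℝ | Comonotonic μ X Z})
    (htend : TendstoInMeasure μ Y Filter.atTop Ylim) :
    Ylim ∈ {Z : Ω → ℝ | Comonotonic μ X Z} := by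
  obtain ⟨ns, -, hns⟩ := htend.exists_seq_tendsto_ae
  have h1 := (Measure.quasiMeasurePreserving_fst (μ := μ) (ν := μ)).ae hns
  have h2 := (Measure.quasiMeasurePreserving_snd (μ := μ) (ν := μ)).ae hns
  have h3 : ∀ᵐ p ∂(μ.prod μ), ∀ n, 0 ≤ (X p.1 - X p.2) * (Y n p.1 - Y n p.2) :=
    ae_all_iff.2 hmem
  change ∀ᵐ p ∂(μ.prod μ), 0 ≤ (X p.1 - X p.2) * (Ylim p.1 - Ylim p.2)
  filter_upwards [h1, h2, h3] with p hp1 hp2 hp3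
  exact ge_of_tendsto' ((hp1.sub hp2).const_mul (X p.1 - X p.2)) (fun i => hp3 (ns i))
end

section
/- If X and Y are comonotonic random variables and neither X nor Y is almost surely constant, then the only almost surely constant element of C_{X,Y} := conv(cone({X} ∪ {Y})) is 0; equivalently, for all α, β > 0 the random variable αX + βY is not almost surely constant. -/
open MeasureTheory Set

variable {Ω : Type*} [MeasurableSpace Ω]

/-- If `X` and `Y` are comonotonic and neither is almost surely constant, then for all
`α, β > 0` the random variable `αX + βY` is not almost surely constant (equivalently, the
only almost surely constant element of `conv(cone({X} ∪ {Y}))` is `0`). -/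
theorem not_aeConst_smul_add_smul (μ : Measure Ω) [IsProbabilityMeasure μ]
    (X Y : Ω → ℝ) (hXY : Comonotonic μ X Y)
    (hX : ¬∃ c : ℝ, ∀ᵐ ω ∂μ, X ω = c) (hY : ¬∃ c : ℝ, ∀ᵐ ω ∂μ, Y ω = c) :
    ∀ α β : ℝ, 0 < α → 0 < β → ¬∃ c : ℝ, ∀ᵐ ω ∂μ, (α • X + β • Y) ω = c := by
  rintro α β hα hβ ⟨c, hc⟩
  obtain ⟨ω, h1, h2⟩ := ((Measure.ae_ae_of_ae_prod hXY).and hc).exists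
  refine hX ⟨X ω, ?_⟩
  filter_upwards [h1, hc] with ω' h3 h4
  simp only [Pi.add_apply, Pi.smul_apply, smul_eq_mul] at h2 h3 h4
  have h5 : β * (Y ω - Y ω') = -(α * (X ω - X ω')) := by linarith
  have h6 : β * ((X ω - X ω') * (Y ω - Y ω')) = -(α * (X ω - X ω') ^ 2) := by
    linear_combination (X ω - X ω') * h5
  have h7 := mul_nonneg hβ.le h3
  have h8 : (X ω - X ω') ^ 2 = 0 := by
    apply le_antisymm _ (sq_nonneg _)
    by_contra! h
    have := mul_pos hα h
    linarith
  have := pow_eq_zero_iff (two_ne_zero) |>.1 h8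
  linarith
end

section
/- Let A ⊆ X be a star-shaped set with 0 ∈ A, and let C ⊆ cone(A^∁) be a cone such that both A ∩ C and A^∁ ∩ C are convex. Then the Minkowski gauge D_A is additive on C: D_A(X + Y) = D_A(X) + D_A(Y) for every X, Y ∈ C. -/
open Set ENNReal

variable {E : Type*} [AddCommGroup E] [Module ℝ E]

/-- `A` is star-shaped (about the origin): `λX ∈ A` for all `X ∈ A` and `λ ∈ [0,1]`. -/
def StarShaped (A : Set E) : Prop :=
  ∀ X ∈ A, ∀ l ∈ Icc (0 : ℝ) 1, l • X ∈ A

/-- The Minkowski gauge (Minkowski deviation) of `A`: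
`D_A(X) = inf {m > 0 : m⁻¹ • X ∈ A}`, with `inf ∅ = +∞`. -/
noncomputable def gaugeD (A : Set E) (X : E) : ℝ≥0∞ :=
  ⨅ m : {m : ℝ // 0 < m ∧ m⁻¹ • X ∈ A}, ENNReal.ofReal m.1

/-- The cogauge of `B`: `W_B(X) = sup {m > 0 : m⁻¹ • X ∈ B}`, with `sup ∅ = 0`. -/
noncomputable def cogaugeD (B : Set E) (X : E) : ℝ≥0∞ :=
  ⨆ m : {m : ℝ // 0 < m ∧ m⁻¹ • X ∈ B}, ENNReal.ofReal m.1

/-- The conic hull of `S`: all nonnegative multiples of elements of `S`. -/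
def coneHull (S : Set E) : Set E :=
  {x | ∃ c : ℝ, 0 ≤ c ∧ ∃ s ∈ S, x = c • s}

lemma gaugeD_zero' (A : Set E) (h0 : (0 : E) ∈ A) : gaugeD A 0 = 0 := by
  refine le_antisymm (le_of_forall_gt fun c hc => ?_) zero_le
  obtain ⟨d, hd0, hdc⟩ := exists_between hc
  have hdt : d ≠ ⊤ := ne_top_of_lt hdc
  refine lt_of_le_of_lt (iInf_le _ ⟨d.toReal, ENNReal.toReal_pos hd0.ne' hdt, by simpa using h0⟩) ?_
  simpa [ENNReal.ofReal_toReal hdt] using hdc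

lemma gaugeD_lower (A : Set E) (hA : StarShaped A) (X : E) (c : ℝ) (hc : 0 < c)
    (h : c⁻¹ • X ∉ A) : ENNReal.ofReal c ≤ gaugeD A X := by
  refine le_iInf fun ⟨m, hm, hmA⟩ => ENNReal.ofReal_le_ofReal ?_
  by_contra hlt
  push Not at hlt
  apply h
  have h1 := hA _ hmA (m / c) ⟨by positivity, (div_le_one hc).2 hlt.le⟩
  rw [smul_smul] at h1
  convert h1 using 2
  field_simp

lemma gaugeD_pos (A C : Set E) (hA : StarShaped A) (hCsub : C ⊆ coneHull Aᶜ) (X : E)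
    (hX : X ∈ C) (hX0 : X ≠ 0) : 0 < gaugeD A X := by
  obtain ⟨c, hc, s, hs, rfl⟩ := hCsub hX
  have hc' : 0 < c := lt_of_le_of_ne hc (by rintro rfl; simp at hX0)
  refine lt_of_lt_of_le (ENNReal.ofReal_pos.2 hc') (gaugeD_lower A hA _ c hc' ?_)
  rwa [smul_smul, inv_mul_cancel₀ hc'.ne', one_smul]

lemma comb_mem (S : Set E) (hS : Convex ℝ S) (X Y : E) (m n : ℝ) (hm : 0 < m) (hn : 0 < n)
    (hX : m⁻¹ • X ∈ S) (hY : n⁻¹ • Y ∈ S) : (m + n)⁻¹ • (X + Y) ∈ S := by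
  have h := hS hX hY (a := m / (m + n)) (b := n / (m + n)) (by positivity) (by positivity)
    (by field_simp)
  rw [smul_smul, smul_smul] at h
  convert h using 1
  rw [smul_add]
  congr 2 <;> field_simp

lemma exists_good (A : Set E) (X : E) (a : ℝ≥0∞) (ha : a < gaugeD A X) :
    ∃ m : ℝ, 0 < m ∧ a ≤ ENNReal.ofReal m ∧ m⁻¹ • X ∉ A := by
  obtain ⟨d, hd0, hdc⟩ := exists_between ha
  have hdt : d ≠ ⊤ := ne_top_of_lt hdc
  have hp : 0 < d.toReal := ENNReal.toReal_pos (ne_zero_of_lt hd0) hdt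
  refine ⟨d.toReal, hp, by rw [ENNReal.ofReal_toReal hdt]; exact hd0.le, fun hmem => ?_⟩
  have : gaugeD A X ≤ ENNReal.ofReal d.toReal :=
    iInf_le (fun m : {m : ℝ // 0 < m ∧ m⁻¹ • X ∈ A} => ENNReal.ofReal m.1) ⟨d.toReal, hp, hmem⟩
  rw [ENNReal.ofReal_toReal hdt] at this
  exact absurd hdc (not_lt.2 this)

/-- If `A` is star-shaped with `0 ∈ A`, and `C ⊆ cone(A^∁)` is a cone such that both
`A ∩ C` and `A^∁ ∩ C` are convex, then the Minkowski gauge `D_A` is additive on `C`. -/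
theorem gauge_additive_on_cone (A C : Set E) (hA : StarShaped A) (h0 : (0 : E) ∈ A)
    (hCsub : C ⊆ coneHull Aᶜ) (hCcone : ∀ x ∈ C, ∀ c : ℝ, 0 ≤ c → c • x ∈ C)
    (hconv : Convex ℝ (A ∩ C)) (hconv' : Convex ℝ (Aᶜ ∩ C)) :
    ∀ X ∈ C, ∀ Y ∈ C, gaugeD A (X + Y) = gaugeD A X + gaugeD A Y := by
  intro X hX Y hY
  by_cases hX0 : X = 0
  · subst hX0; simp [gaugeD_zero' A h0]
  by_cases hY0 : Y = 0
  · subst hY0; simp [gaugeD_zero' A h0]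
  have hpX := gaugeD_pos A C hA hCsub X hX hX0
  have hpY := gaugeD_pos A C hA hCsub Y hY hY0
  apply le_antisymm
  · conv_rhs => unfold gaugeD
    refine ENNReal.le_iInf_add_iInf ?_
    rintro ⟨m, hm, hmA⟩ ⟨n, hn, hnA⟩
    have h := comb_mem _ hconv X Y m n hm hn ⟨hmA, hCcone X hX _ (by positivity)⟩
      ⟨hnA, hCcone Y hY _ (by positivity)⟩
    rw [← ENNReal.ofReal_add hm.le hn.le]
    exact iInf_le (fun m : {m : ℝ // 0 < m ∧ m⁻¹ • (X + Y) ∈ A} => ENNReal.ofReal m.1)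
      ⟨m + n, by positivity, h.1⟩
  · refine le_of_forall_lt fun t ht => ?_
    obtain ⟨a, ha, b, hb, hab⟩ := ENNReal.exists_lt_add_of_lt_add ht hpX.ne' hpY.ne'
    obtain ⟨m, hm, ham, hmA⟩ := exists_good A X a ha
    obtain ⟨n, hn, hbn, hnA⟩ := exists_good A Y b hb
    have h := comb_mem _ hconv' X Y m n hm hn ⟨hmA, hCcone X hX _ (by positivity)⟩
      ⟨hnA, hCcone Y hY _ (by positivity)⟩
    refine lt_of_lt_of_le (hab.trans_le (add_le_add ham hbn)) ?_
    rw [← ENNReal.ofReal_add hm.le hn.le]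
    exact gaugeD_lower A hA _ _ (by positivity) h.1
end
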